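/- Let A, k, m be integers with |A| ≥ 2 and k > 0, and suppose ψ_k(A)² divides ψ_m(A). Then ψ_k(A) divides m. -/

import Mathlib

/-- The Lucas sequence `ψ_n(A)` for natural indices:
`ψ_0 = 0`, `ψ_1 = 1`, `ψ_{n+2} = A·ψ_{n+1} − ψ_n`. -/
def psiNat (A : ℤ) : ℕ → ℤ
  | 0 => 0
  | 1 => 1
  | n + 2 => A * psiNat A (n + 1) - psiNat A n

/-- The Lucas sequence `χ_n(A)` for natural indices:
`χ_0 = 2`, `χ_1 = A`, `χ_{n+2} = A·χ_{n+1} − χ_n`. -/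
def chiNat (A : ℤ) : ℕ → ℤ
  | 0 => 2
  | 1 => A
  | n + 2 => A * chiNat A (n + 1) - chiNat A n

/-- The Lucas sequence `ψ_n(A)` for `n ∈ ℤ`: the unique solution of
`x_{n+1} = A·x_n − x_{n−1}` with `ψ_0 = 0`, `ψ_1 = 1`
(for negative indices, `ψ_{−n} = −ψ_n`). -/
def psi (A : ℤ) : ℤ → ℤ
  | .ofNat n => psiNat A n
  | .negSucc n => -psiNat A (n + 1)

/-- The Lucas sequence `χ_n(A)` for `n ∈ ℤ`: the unique solution of
`x_{n+1} = A·x_n − x_{n−1}` with `χ_0 = 2`, `χ_1 = A`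
(for negative indices, `χ_{−n} = χ_n`). -/
def chi (A : ℤ) : ℤ → ℤ
  | .ofNat n => chiNat A n
  | .negSucc n => chiNat A (n + 1)

/-!
Modulo `ψ_k`, adding `k` to the index multiplies `ψ` by the unit `ψ_{k+1}`. Hence whether `ψ_k`
divides `ψ_n` depends only on `n` modulo `k`, and as `|ψ_n|` grows strictly with `|n|`, it does so
only if `k ∣ n`. Carrying the expansion one order further gives `ψ_{kn} ≡ n ψ_{k+1}^{n-1} ψ_k`
modulo `ψ_k²`, so that `ψ_k² ∣ ψ_{kn}` exactly when `ψ_k ∣ n`.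
-/

section Recurrence

variable (A : ℤ)

@[simp]
theorem psi_zero : psi A 0 = 0 := rfl

@[simp]
theorem psi_one : psi A 1 = 1 := rfl

@[simp]
theorem psi_neg (n : ℤ) : psi A (-n) = -psi A n := by
  obtain ⟨n, rfl | rfl⟩ := n.eq_nat_or_neg <;> cases n
  · simp
  · rfl
  · simp
  · exact (neg_neg _).symm

theorem psi_add_two (n : ℤ) : psi A (n + 2) = A * psi A (n + 1) - psi A n := by
  match n with
  | .ofNat n => rfl
  | -1 => simp
  | .negSucc (n + 1) =>
    have reflected : psi A (n + 2) = A * psi A (n + 1) - psi A n := rfl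
    rw [show Int.negSucc (n + 1) + 2 = -n by omega,
      show Int.negSucc (n + 1) + 1 = -(n + 1) by omega,
      show Int.negSucc (n + 1) = -(n + 2) by omega]
    simp only [psi_neg]
    linear_combination -reflected

theorem psi_add_one (n : ℤ) : psi A (n + 1) = A * psi A n - psi A (n - 1) := by
  linear_combination (norm := ring_nf) psi_add_two A (n - 1)

theorem psi_sub_one (n : ℤ) : psi A (n - 1) = A * psi A n - psi A (n + 1) := by
  linear_combination psi_add_one A n

theorem psi_add (m n : ℤ) :
    psi A (m + n) = psi A (m + 1) * psi A n - psi A m * psi A (n - 1) := by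
  induction n using Polynomial.Chebyshev.induct with
  | zero => simp
  | one => simp
  | add_two n ih₁ ih₀ =>
    rw [← add_assoc, psi_add_two, add_assoc m, ih₁, ih₀, psi_add_two A n,
      show (n + 2 - 1 : ℤ) = n + 1 by ring, add_sub_cancel_right, psi_sub_one A n]
    ring
  | neg_add_one n ih₀ ih₁ =>
    rw [← add_sub_assoc, psi_sub_one, add_assoc m, ih₁, ih₀, psi_sub_one A (-n - 1),
      sub_add_cancel, add_sub_cancel_right, psi_sub_one A (-n)]
    ring

end Recurrence

section Divisibility

variable (A k : ℤ)

theorem isCoprime_psi_psi_add_one : IsCoprime (psi A k) (psi A (k + 1)) := by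
  have bezout := psi_add A (-k) (k + 1)
  simp only [neg_add_cancel_left, add_sub_cancel_right, psi_one, psi_neg] at bezout
  exact ⟨psi A k, psi A (-k + 1), by linear_combination -bezout⟩

theorem psi_dvd_psi_add_self_iff (n : ℤ) : psi A k ∣ psi A (n + k) ↔ psi A k ∣ psi A n := by
  rw [add_comm, psi_add, dvd_sub_left (dvd_mul_right _ _)]
  exact ⟨(isCoprime_psi_psi_add_one A k).dvd_of_dvd_mul_left, fun h ↦ h.mul_left _⟩

theorem periodic_psi_dvd_psi : Function.Periodic (fun n ↦ psi A k ∣ psi A n) k :=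
  fun n ↦ propext (psi_dvd_psi_add_self_iff A k n)

theorem psi_dvd_psi_emod_iff (m : ℤ) : psi A k ∣ psi A (m % k) ↔ psi A k ∣ psi A m := by
  rw [Int.emod_def, mul_comm]
  exact ((periodic_psi_dvd_psi A k).sub_int_mul_eq (m / k)).to_iff

theorem psi_dvd_psi_of_dvd {k m : ℤ} (h : k ∣ m) : psi A k ∣ psi A m := by
  rw [← psi_dvd_psi_emod_iff, Int.emod_eq_zero_of_dvd h, psi_zero]
  exact dvd_zero _

theorem psi_add_modEq (n : ℤ) :
    psi A (k + n) ≡ psi A (k + 1) * psi A n + psi A k * psi A (n + 1)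
      [ZMOD psi A k * psi A n] :=
  Int.modEq_iff_dvd.2 ⟨A, by rw [psi_add A k n, psi_sub_one A n]; ring⟩

theorem psi_mul_add_one_modEq (n : ℕ) :
    psi A (k * n + 1) ≡ psi A (k + 1) ^ n [ZMOD psi A k] := by
  induction n with
  | zero => simp
  | succ n ih =>
    calc psi A (k * (n + 1 : ℕ) + 1)
        = psi A (k + 1) * psi A (k * n + 1) - psi A k * psi A (k * n) := by
          have expansion := psi_add A k (k * n + 1)
          rw [add_sub_cancel_right] at expansion
          rw [← expansion]
          push_cast
          ring_nf
      _ ≡ psi A (k + 1) * psi A (k + 1) ^ n - 0 [ZMOD psi A k] :=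
          (ih.mul_left _).sub (Int.modEq_zero_iff_dvd.2 (dvd_mul_right _ _))
      _ = psi A (k + 1) ^ (n + 1) := by ring

theorem psi_mul_succ_modEq (n : ℕ) :
    psi A (k * (n + 1)) ≡ psi A k * ((n + 1) * psi A (k + 1) ^ n) [ZMOD psi A k ^ 2] := by
  induction n with
  | zero => simp
  | succ n ih =>
    have dvd_modulus : psi A k ^ 2 ∣ psi A k * psi A (k * (n + 1)) := by
      rw [sq]
      exact mul_dvd_mul_left _ (psi_dvd_psi_of_dvd A (dvd_mul_right _ _))
    have mul_psi_modEq : psi A k * psi A (k * (n + 1) + 1) ≡ psi A k * psi A (k + 1) ^ (n + 1)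
        [ZMOD psi A k ^ 2] := by
      rw [sq]
      exact_mod_cast (psi_mul_add_one_modEq A k (n + 1)).mul_left'
    calc psi A (k * ((n + 1 : ℕ) + 1))
        = psi A (k + k * (n + 1)) := by push_cast; ring_nf
      _ ≡ psi A (k + 1) * psi A (k * (n + 1)) + psi A k * psi A (k * (n + 1) + 1)
            [ZMOD psi A k ^ 2] := (psi_add_modEq A k _).of_dvd dvd_modulus
      _ ≡ psi A (k + 1) * (psi A k * ((n + 1) * psi A (k + 1) ^ n))
            + psi A k * psi A (k + 1) ^ (n + 1) [ZMOD psi A k ^ 2] :=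
          (ih.mul_left _).add mul_psi_modEq
      _ = psi A k * (((n + 1 : ℕ) + 1) * psi A (k + 1) ^ (n + 1)) := by push_cast; ring

variable {A k}

theorem psi_sq_dvd_psi_mul_natCast_iff (hk : psi A k ≠ 0) (n : ℕ) :
    psi A k ^ 2 ∣ psi A (k * n) ↔ psi A k ∣ n := by
  cases n with
  | zero => simp
  | succ n =>
    push_cast
    rw [(psi_mul_succ_modEq A k n).dvd_iff, sq, mul_dvd_mul_iff_left hk]
    exact ⟨(isCoprime_psi_psi_add_one A k).pow_right.dvd_of_dvd_mul_right, fun h ↦ h.mul_right _⟩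

theorem psi_sq_dvd_psi_mul_iff (hk : psi A k ≠ 0) (n : ℤ) :
    psi A k ^ 2 ∣ psi A (k * n) ↔ psi A k ∣ n := by
  obtain ⟨n, rfl | rfl⟩ := n.eq_nat_or_neg
  · exact psi_sq_dvd_psi_mul_natCast_iff hk n
  · rw [mul_neg, psi_neg, dvd_neg, dvd_neg, psi_sq_dvd_psi_mul_natCast_iff hk]

end Divisibility

section Growth

variable {A : ℤ} (hA : 2 ≤ |A|)
include hA

theorem strictMono_abs_psi_natCast : StrictMono fun n : ℕ ↦ |psi A n| := by
  refine strictMono_nat_of_lt_succ fun n ↦ ?_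
  push_cast
  induction n with
  | zero => simp
  | succ n ih =>
    push_cast
    have triangle : |A| * |psi A (n + 1)| - |psi A n| ≤ |psi A (n + 1 + 1)| := by
      rw [psi_add_one A (n + 1), add_sub_cancel_right, ← abs_mul]
      exact abs_sub_abs_le_abs_sub _ _
    linarith [mul_le_mul_of_nonneg_right hA (abs_nonneg (psi A (n + 1)))]

theorem abs_psi_lt_abs_psi {m n : ℤ} (h : |m| < |n|) : |psi A m| < |psi A n| := by
  have abs_psi_natAbs (n : ℤ) : |psi A n.natAbs| = |psi A n| := by
    obtain ⟨n, rfl | rfl⟩ := n.eq_nat_or_neg <;> simp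
  rw [Int.abs_eq_natAbs, Int.abs_eq_natAbs, Nat.cast_lt] at h
  simpa only [abs_psi_natAbs] using strictMono_abs_psi_natCast hA h

theorem psi_eq_zero_iff {n : ℤ} : psi A n = 0 ↔ n = 0 := by
  refine ⟨fun h ↦ ?_, fun h ↦ h ▸ psi_zero A⟩
  by_contra hn
  simpa [h] using abs_psi_lt_abs_psi hA (m := 0) (n := n) (by simpa using hn)

theorem psi_dvd_psi_iff {k m : ℤ} : psi A k ∣ psi A m ↔ k ∣ m := by
  refine ⟨fun h ↦ ?_, psi_dvd_psi_of_dvd A⟩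
  obtain rfl | hk := eq_or_ne k 0
  · simpa [psi_eq_zero_iff hA] using h
  have remainder_lt : |m % k| < |k| := by
    rw [abs_of_nonneg (Int.emod_nonneg m hk)]
    exact Int.emod_lt_abs m hk
  have psi_remainder : psi A (m % k) = 0 :=
    Int.eq_zero_of_abs_lt_dvd ((abs_dvd _ _).2 ((psi_dvd_psi_emod_iff A k m).2 h))
      (abs_psi_lt_abs_psi hA remainder_lt)
  exact Int.dvd_of_emod_eq_zero ((psi_eq_zero_iff hA).1 psi_remainder)

end Growth

theorem psi_sq_dvd_psi_general (A k m : ℤ) (hA : 2 ≤ |A|) :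
    psi A k ^ 2 ∣ psi A m ↔ k * psi A k ∣ m := by
  obtain rfl | hk := eq_or_ne k 0
  · simp [psi_eq_zero_iff hA]
  by_cases hkm : k ∣ m
  · obtain ⟨n, rfl⟩ := hkm
    rw [psi_sq_dvd_psi_mul_iff ((psi_eq_zero_iff hA).not.2 hk), mul_dvd_mul_iff_left hk]
  · refine iff_of_false (fun h ↦ hkm ?_) fun h ↦ hkm (dvd_of_mul_right_dvd h)
    exact (psi_dvd_psi_iff hA).1 ((dvd_pow_self _ two_ne_zero).trans h)

/-- If `|A| ≥ 2`, `k > 0` and `ψ_k(A)² ∣ ψ_m(A)`, then `ψ_k(A) ∣ m`. -/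
theorem psi_sq_dvd_psi (A k m : ℤ) (hA : 2 ≤ |A|) (hk : 0 < k)
    (h : (psi A k) ^ 2 ∣ psi A m) :
    psi A k ∣ m :=
  dvd_of_mul_left_dvd ((psi_sq_dvd_psi_general A k m hA).1 h)
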